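/- The graph 4K₂ + K₃ (the join of the disjoint union of four copies of K₂ with K₃) is 3-connected, has connectivity κ = 3 and minimum degree δ = 4, has no cycle of length at least 4δ − 2κ = 10, and has no dominating cycle. -/

import Mathlib

/-!
Let `f` label the components of `G - S`. Along a cycle meeting `S`, the vertex following the last
visit to a given label lies in `S`, and distinct labels give distinct such vertices, so the cycle
meets at most `|S|` labels; a cycle avoiding `S` meets only one. In `4K₂ + K₃`, with `S` the
triangle, every cycle therefore misses one of the four copies of `K₂`: it has at most `11 - 2`
vertices, and the missed copy is an edge outside it. As for the connectivity, a vertex set whose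
deletion disconnects a graph contains every universal vertex, and the universal vertices of
`4K₂ + K₃` are those of the triangle.
-/

open SimpleGraph

/-- `S` is a cut-set: removing `S` leaves a disconnected or trivial graph. -/
def IsCutSet {V : Type*} (G : SimpleGraph V) (S : Set V) : Prop :=
  ¬ (G.induce Sᶜ).Connected ∨ Sᶜ.Subsingleton

/-- The connectivity `κ` of `G`. -/
noncomputable def kappa {V : Type*} (G : SimpleGraph V) : ℕ :=
  sInf {k | ∃ S : Set V, S.ncard = k ∧ IsCutSet G S}

/-- The graph `4K₂ + K₃`: four disjoint edges (vertices `Sum.inl i`, paired by `i / 2`)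
joined completely to a triangle (vertices `Sum.inr j`). -/
def G18 : SimpleGraph (Fin 8 ⊕ Fin 3) :=
  SimpleGraph.fromRel (fun a b =>
    match a, b with
    | Sum.inl i, Sum.inl j => i.val / 2 = j.val / 2
    | _, _ => True)

noncomputable instance : DecidableRel G18.Adj := Classical.decRel _

section Connectivity

variable {V ι : Type*} {G : SimpleGraph V} {S : Set V} {f : V → ι}

/-- `f` labels the connected components of `G - S`: it is constant on each of them, which is
encoded edge by edge. Different components may share a label, and the labels on `S` are
irrelevant. -/
def IsComponentLabeling (G : SimpleGraph V) (S : Set V) (f : V → ι) : Prop :=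
  ∀ ⦃u v⦄, u ∉ S → v ∉ S → G.Adj u v → f u = f v

theorem IsComponentLabeling.eq_of_reachable (hf : IsComponentLabeling G S f) {u v : ↥Sᶜ}
    (h : (G.induce Sᶜ).Reachable u v) : f u = f v := by
  obtain ⟨p⟩ := h
  induction p with
  | nil => rfl
  | @cons u v _ huv _ ih => exact (hf u.2 v.2 huv).trans ih

theorem IsComponentLabeling.eq_of_mem_support (hf : IsComponentLabeling G S f) {u v : V}
    (p : G.Walk u v) (hp : ∀ w ∈ p.support, w ∉ S) {w : V} (hw : w ∈ p.support) : f u = f w := by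
  classical
  exact hf.eq_of_reachable ⟨(p.takeUntil w hw).induce Sᶜ
    fun y hy => hp y (p.support_takeUntil_subset_support hw hy)⟩

theorem IsComponentLabeling.isCutSet (hf : IsComponentLabeling G S f) {u v : V} (hu : u ∉ S)
    (hv : v ∉ S) (huv : f u ≠ f v) : IsCutSet G S :=
  Or.inl fun h => huv (hf.eq_of_reachable (h.preconnected ⟨u, hu⟩ ⟨v, hv⟩))

theorem IsCutSet.universalVerts_subset_or_subsingleton_compl (hS : IsCutSet G S) :
    G.universalVerts ⊆ S ∨ Sᶜ.Subsingleton := by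
  refine hS.imp_left fun hdisc u hu => by_contra fun huS => hdisc ?_
  have huniv : (G.induce Sᶜ).IsUniversal ⟨u, huS⟩ := fun w huw => hu fun h => huw (Subtype.ext h)
  exact Connected.of_isUniversal huniv

theorem kappa_eq_ncard_of_subset_universalVerts [Finite V] {U : Set V}
    (hU : U ⊆ G.universalVerts) (hne : U ≠ Set.univ) (hcut : IsCutSet G U) :
    kappa G = U.ncard := by
  refine IsLeast.csInf_eq ⟨⟨U, rfl, hcut⟩, ?_⟩
  rintro _ ⟨S, rfl, hS⟩
  rcases hS.universalVerts_subset_or_subsingleton_compl with hsub | htriv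
  · exact Set.ncard_le_ncard (hU.trans hsub)
  · have hS_compl : Sᶜ.ncard ≤ 1 := Set.ncard_le_one_iff_subsingleton.2 htriv
    have hS_add := Set.ncard_add_ncard_compl S
    have hU_lt := Set.ncard_lt_card hne
    omega

end Connectivity

section Cycles

variable {V ι : Type*} {G : SimpleGraph V}

theorem length_add_card_le_of_isCycle [Fintype V] {x : V} {C : G.Walk x x} (hC : C.IsCycle)
    {T : Finset V} (hT : ∀ v ∈ T, v ∉ C.support) : C.length + T.card ≤ Fintype.card V := by
  classical
  have hdisj : Disjoint C.support.tail.toFinset T :=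
    Finset.disjoint_right.2 fun v hv hvC => hT v hv (List.mem_of_mem_tail (List.mem_toFinset.1 hvC))
  calc C.length + T.card = C.support.tail.toFinset.card + T.card := by
        rw [List.toFinset_card_of_nodup hC.support_nodup, List.length_tail, Walk.length_support,
          Nat.add_sub_cancel]
    _ = (C.support.tail.toFinset ∪ T).card := (Finset.card_union_of_disjoint hdisj).symm
    _ ≤ Fintype.card V := Finset.card_le_univ _

variable {S : Finset V} {f : V → ι}

-- Dropping the start of the walk from the count on the right is what makes the induction work
-- whether or not the start lies in `S`.
theorem IsComponentLabeling.card_image_support_le_countP [DecidableEq V] [DecidableEq ι]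
    (hf : IsComponentLabeling G S f) {u v : V} (p : G.Walk u v) (hv : v ∈ S) :
    ((p.support.toFinset \ S).image f).card ≤ p.support.tail.countP (· ∈ S) := by
  induction p with
  | nil => simp [hv]
  | @cons u w v huw q ih =>
    have hcount : q.support.countP (· ∈ S) =
        q.support.tail.countP (· ∈ S) + if w ∈ S then 1 else 0 := by
      rw [← q.cons_tail_support, List.countP_cons]
      simp
    rw [Walk.support_cons, List.toFinset_cons, List.tail_cons, hcount]
    by_cases hu : u ∈ S
    · rw [Finset.insert_sdiff_of_mem _ hu]
      exact (ih hv).trans (Nat.le_add_right _ _)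
    rw [Finset.insert_sdiff_of_notMem _ hu, Finset.image_insert]
    by_cases hw : w ∈ S
    · rw [if_pos hw]
      exact (Finset.card_insert_le _ _).trans (Nat.add_le_add_right (ih hv) 1)
    · have hfu : f u ∈ (q.support.toFinset \ S).image f :=
        Finset.mem_image.2 ⟨w, by simp [hw], (hf hu hw huw).symm⟩
      rw [Finset.insert_eq_of_mem hfu, if_neg hw]
      exact ih hv

theorem IsComponentLabeling.card_image_support_le_of_isCycle [DecidableEq V] [DecidableEq ι]
    (hf : IsComponentLabeling G S f) {x : V} {C : G.Walk x x} (hC : C.IsCycle) :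
    ((C.support.toFinset \ S).image f).card ≤ max 1 S.card := by
  by_cases hmeet : ∃ y ∈ C.support, y ∈ S
  · obtain ⟨y, hyC, hyS⟩ := hmeet
    let D := C.rotate y hyC
    have hsupport : C.support.toFinset = D.support.toFinset := by
      ext v
      simp [D]
    calc ((C.support.toFinset \ S).image f).card
        ≤ D.support.tail.countP (· ∈ S) := hsupport ▸ hf.card_image_support_le_countP D hyS
      _ = (D.support.tail.toFinset.filter (· ∈ S)).card :=
          ((hC.rotate hyC).support_nodup.card_eq_countP).symm
      _ ≤ S.card := Finset.card_le_card fun v hv => (Finset.mem_filter.1 hv).2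
      _ ≤ max 1 S.card := le_max_right _ _
  · push Not at hmeet
    have hconst : (C.support.toFinset \ S).image f ⊆ {f x} := by
      simp only [Finset.subset_iff, Finset.mem_image, Finset.mem_sdiff, List.mem_toFinset,
        Finset.mem_singleton]
      rintro _ ⟨w, ⟨hw, -⟩, rfl⟩
      exact (hf.eq_of_mem_support C hmeet hw).symm
    exact (Finset.card_le_card hconst).trans (le_max_left 1 S.card)

theorem IsComponentLabeling.exists_label_forall_notMem_support [Fintype ι]
    (hf : IsComponentLabeling G S f) (hS : max 1 S.card < Fintype.card ι) {x : V}
    {C : G.Walk x x} (hC : C.IsCycle) : ∃ i, ∀ v ∉ S, f v = i → v ∉ C.support := by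
  classical
  have hlt := (hf.card_image_support_le_of_isCycle hC).trans_lt hS
  rw [← Finset.card_univ] at hlt
  obtain ⟨i, -, hi⟩ := Finset.exists_mem_notMem_of_card_lt_card hlt
  exact ⟨i, fun v hvS hvi hvC => hi (Finset.mem_image.2 ⟨v, by simp [hvS, hvC], hvi⟩)⟩

end Cycles

section FourEdgesJoinTriangle

/-- The vertex set of the `K₃` in `4K₂ + K₃`. -/
def triangle : Finset (Fin 8 ⊕ Fin 3) := Finset.univ.map Function.Embedding.inr

/-- The index of the copy of `K₂` containing a vertex of `4K₂ + K₃`, labeling the components left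
by deleting the triangle. The value `0` on the triangle is arbitrary. -/
def pairIndex : Fin 8 ⊕ Fin 3 → Fin 4 :=
  Sum.elim (fun i => ⟨i / 2, by omega⟩) fun _ => 0

/-- The vertex set of the `i`-th copy of `K₂` in `4K₂ + K₃`. -/
def pair (i : Fin 4) : Finset (Fin 8 ⊕ Fin 3) := {v | v ∉ triangle ∧ pairIndex v = i}

theorem adj_G18_iff (a b : Fin 8 ⊕ Fin 3) :
    G18.Adj a b ↔ a ≠ b ∧ (a ∈ triangle ∨ b ∈ triangle ∨ pairIndex a = pairIndex b) := by
  rcases a with i | i <;> rcases b with j | j <;>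
    simp [G18, triangle, pairIndex, eq_comm]

theorem card_pair (i : Fin 4) : (pair i).card = 2 := by
  revert i
  decide

theorem isClique_pair (i : Fin 4) : G18.IsClique (pair i : Set (Fin 8 ⊕ Fin 3)) := by
  intro a ha b hb hab
  have hai : pairIndex a = i := (Finset.mem_filter.1 ha).2.2
  have hbi : pairIndex b = i := (Finset.mem_filter.1 hb).2.2
  exact (adj_G18_iff a b).2 ⟨hab, Or.inr (Or.inr (hai.trans hbi.symm))⟩

theorem triangle_subset_universalVerts :
    (triangle : Set (Fin 8 ⊕ Fin 3)) ⊆ G18.universalVerts :=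
  fun a ha b hab => (adj_G18_iff a b).2 ⟨hab, Or.inl ha⟩

theorem isComponentLabeling_pairIndex : IsComponentLabeling G18 triangle pairIndex :=
  fun a b ha hb hab => (((adj_G18_iff a b).1 hab).2.resolve_left ha).resolve_left hb

theorem neighborFinset_G18 (v : Fin 8 ⊕ Fin 3) : G18.neighborFinset v =
    Finset.univ.filter fun w =>
      v ≠ w ∧ (v ∈ triangle ∨ w ∈ triangle ∨ pairIndex v = pairIndex w) := by
  ext w
  simp [adj_G18_iff]

theorem degree_G18 (v : Fin 8 ⊕ Fin 3) : G18.degree v = if v ∈ triangle then 10 else 4 := by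
  rw [← card_neighborFinset_eq_degree, neighborFinset_G18]
  revert v
  decide

theorem minDegree_G18 : G18.minDegree = 4 := by
  apply le_antisymm
  · exact (G18.minDegree_le_degree (Sum.inl 0)).trans_eq (degree_G18 _)
  · refine G18.le_minDegree_of_forall_le_degree 4 fun v => ?_
    rw [degree_G18]
    split_ifs <;> norm_num

theorem kappa_G18 : kappa G18 = 3 := by
  have hzero : Sum.inl 0 ∉ (triangle : Set (Fin 8 ⊕ Fin 3)) := by simp [triangle]
  have htwo : Sum.inl 2 ∉ (triangle : Set (Fin 8 ⊕ Fin 3)) := by simp [triangle]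
  have hcut : IsCutSet G18 triangle :=
    isComponentLabeling_pairIndex.isCutSet hzero htwo (by decide)
  rw [kappa_eq_ncard_of_subset_universalVerts triangle_subset_universalVerts
    (Set.ne_univ_iff_exists_notMem _ |>.2 ⟨_, hzero⟩) hcut, Set.ncard_coe_finset]
  rfl

theorem exists_pair_forall_notMem_support {x : Fin 8 ⊕ Fin 3} {C : G18.Walk x x}
    (hC : C.IsCycle) : ∃ i, ∀ v ∈ pair i, v ∉ C.support := by
  obtain ⟨i, hi⟩ :=
    isComponentLabeling_pairIndex.exists_label_forall_notMem_support (by decide) hC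
  exact ⟨i, fun v hv => hi v (Finset.mem_filter.1 hv).2.1 (Finset.mem_filter.1 hv).2.2⟩

end FourEdgesJoinTriangle

/-- `4K₂ + K₃` is 3-connected with κ = 3 and δ = 4, has no cycle of
length at least 4δ - 2κ = 10, and has no dominating cycle. -/
theorem stmt18 :
    kappa G18 = 3 ∧ G18.minDegree = 4 ∧
    (∀ (x : Fin 8 ⊕ Fin 3) (C : G18.Walk x x), C.IsCycle → C.length < 10) ∧
    ¬ ∃ (x : Fin 8 ⊕ Fin 3) (C : G18.Walk x x), C.IsCycle ∧
        ∀ a b, a ∉ C.support → b ∉ C.support → ¬ G18.Adj a b := by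
  refine ⟨kappa_G18, minDegree_G18, fun x C hC => ?_, ?_⟩
  · obtain ⟨i, hi⟩ := exists_pair_forall_notMem_support hC
    have hlength : C.length + 2 ≤ 11 := card_pair i ▸ length_add_card_le_of_isCycle hC hi
    omega
  · rintro ⟨x, C, hC, hdom⟩
    obtain ⟨i, hi⟩ := exists_pair_forall_notMem_support hC
    obtain ⟨a, ha, b, hb, hab⟩ := Finset.one_lt_card.1 (one_lt_two.trans_eq (card_pair i).symm)
    exact hdom a b (hi a ha) (hi b hb) (isClique_pair i ha hb hab)
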